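/- Let A be a *-algebra and let p, f, g be representable positive functionals on A such that p ≤ f, f is absolutely continuous with respect to g, p and g are singular, and p ≠ 0. Then the Lebesgue decomposition of the representable positive functional h := f + p with respect to g is not unique. -/

import Mathlib

open scoped ComplexOrder InnerProductSpace

section StarAlgebraDefs

variable {A : Type} [NonUnitalRing A] [Module ℂ A] [SMulCommClass ℂ A A]
  [IsScalarTower ℂ A A] [StarRing A] [StarModule ℂ A]

/-- A linear functional on a `⋆`-algebra is positive if `0 ≤ f (a⋆ * a)` for every `a`. -/
def IsPosFn (f : A →ₗ[ℂ] ℂ) : Prop := ∀ a : A, 0 ≤ f (star a * a)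

/-- Order on positive functionals: `f ≤ g` iff `g - f` is positive. -/
def FnLE (f g : A →ₗ[ℂ] ℂ) : Prop := IsPosFn (g - f)

/-- `f` is induced by a `⋆`-representation on the Hilbert space `H` with a cyclic vector. -/
def IsRepOn (f : A →ₗ[ℂ] ℂ) (H : Type) [NormedAddCommGroup H]
    [InnerProductSpace ℂ H] [CompleteSpace H] : Prop :=
  ∃ (π : A →⋆ₙₐ[ℂ] (H →L[ℂ] H)) (ξ : H),
    DenseRange (fun a : A => π a ξ) ∧ ∀ a : A, f a = ⟪ξ, π a ξ⟫_ℂ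

/-- A positive linear functional is representable if it is induced by a cyclic
`⋆`-representation on some complex Hilbert space. -/
def IsRepresentable (f : A →ₗ[ℂ] ℂ) : Prop :=
  ∃ (H : Type) (_ : NormedAddCommGroup H) (_ : InnerProductSpace ℂ H) (_ : CompleteSpace H),
    IsRepOn f H

/-- Absolute continuity `f ≪ g` for representable positive functionals: `f` is the pointwise
limit of an increasing sequence of representable positive functionals `fₙ` with
`fₙ ≤ αₙ • g` for some positive reals `αₙ`. -/
def AbsContR (f g : A →ₗ[ℂ] ℂ) : Prop :=
  ∃ (fn : ℕ → (A →ₗ[ℂ] ℂ)) (α : ℕ → ℝ),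
    (∀ n, IsRepresentable (fn n) ∧ IsPosFn (fn n)) ∧
    (∀ n, 0 < α n) ∧
    (∀ n, FnLE (fn n) (fn (n + 1))) ∧
    (∀ n, FnLE (fn n) (((α n : ℂ)) • g)) ∧
    (∀ a : A, Filter.Tendsto (fun n => fn n a) Filter.atTop (nhds (f a)))

/-- Singularity `f ⊥ g` for representable positive functionals: the only representable
positive functional dominated by both `f` and `g` is `0`. -/
def SingularR (f g : A →ₗ[ℂ] ℂ) : Prop :=
  ∀ p : A →ₗ[ℂ] ℂ, IsRepresentable p → IsPosFn p → FnLE p f → FnLE p g → p = 0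

/-- `f = fr + fs` is a Lebesgue decomposition of `f` with respect to `g` (representable
positive functionals). -/
def IsLebDecompR (f g fr fs : A →ₗ[ℂ] ℂ) : Prop :=
  IsRepresentable fr ∧ IsPosFn fr ∧ IsRepresentable fs ∧ IsPosFn fs ∧
    f = fr + fs ∧ AbsContR fr g ∧ SingularR fs g

/-- The Lebesgue decomposition of `f` with respect to `g` is unique. -/
def LebDecompUniqueForR (f g : A →ₗ[ℂ] ℂ) : Prop :=
  ∀ fr fs fr' fs' : A →ₗ[ℂ] ℂ, IsLebDecompR f g fr fs → IsLebDecompR f g fr' fs' →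
    fr = fr' ∧ fs = fs'

end StarAlgebraDefs

/-- The Lebesgue decomposition of representable positive functionals over `A` is unique. -/
def LebDecompUniqueR (A : Type) [NonUnitalRing A] [Module ℂ A] [SMulCommClass ℂ A A]
    [IsScalarTower ℂ A A] [StarRing A] [StarModule ℂ A] : Prop :=
  ∀ f g : A →ₗ[ℂ] ℂ, IsRepresentable f → IsPosFn f → IsRepresentable g → IsPosFn g →
    LebDecompUniqueForR f g

section Helpers

set_option linter.unusedSectionVars false

open Filter Topology ContinuousLinearMap

variable {A : Type} [NonUnitalRing A] [Module ℂ A] [SMulCommClass ℂ A A]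
  [IsScalarTower ℂ A A] [StarRing A] [StarModule ℂ A]

theorem rep_inner_left {H : Type} [NormedAddCommGroup H] [InnerProductSpace ℂ H]
    [CompleteSpace H] (π : A →⋆ₙₐ[ℂ] (H →L[ℂ] H)) (a : A) (x y : H) :
    ⟪π a x, y⟫_ℂ = ⟪x, π (star a) y⟫_ℂ := by
  rw [map_star, star_eq_adjoint, adjoint_inner_right]

theorem clm_mul_apply {H : Type} [NormedAddCommGroup H] [InnerProductSpace ℂ H]
    (S R : H →L[ℂ] H) (x : H) : (S * R) x = S (R x) := rfl

/-- The functional `a ↦ ⟪ξ, R π(a) ξ⟫`. -/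
noncomputable def vecFn {H : Type} [NormedAddCommGroup H] [InnerProductSpace ℂ H]
    [CompleteSpace H] (π : A →⋆ₙₐ[ℂ] (H →L[ℂ] H)) (ξ : H) (R : H →L[ℂ] H) : A →ₗ[ℂ] ℂ where
  toFun a := ⟪ξ, R (π a ξ)⟫_ℂ
  map_add' a b := by simp [inner_add_right]
  map_smul' c a := by simp [inner_smul_right]

theorem vecFn_apply {H : Type} [NormedAddCommGroup H] [InnerProductSpace ℂ H]
    [CompleteSpace H] (π : A →⋆ₙₐ[ℂ] (H →L[ℂ] H)) (ξ : H) (R : H →L[ℂ] H) (a : A) :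
    vecFn π ξ R a = ⟪ξ, R (π a ξ)⟫_ℂ := rfl

/-- The smallest closed subspace containing `π(A)ξ`. -/
noncomputable def cycSub {H : Type} [NormedAddCommGroup H] [InnerProductSpace ℂ H]
    [CompleteSpace H] (π : A →⋆ₙₐ[ℂ] (H →L[ℂ] H)) (ξ : H) : Submodule ℂ H :=
  (LinearMap.range (({ toFun := fun a => π a ξ
                       map_add' := by intro a b; simp
                       map_smul' := by intro a b; simp } : A →ₗ[ℂ] H))).topologicalClosure

section cyc
variable {H : Type} [NormedAddCommGroup H] [InnerProductSpace ℂ H]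
    [CompleteSpace H] (π : A →⋆ₙₐ[ℂ] (H →L[ℂ] H)) (ξ : H)

theorem mem_cycSub_iff (x : H) :
    x ∈ cycSub π ξ ↔ x ∈ closure (Set.range (fun a : A => π a ξ)) := by
  unfold cycSub
  rw [← SetLike.mem_coe, Submodule.topologicalClosure_coe]
  rfl

instance : CompleteSpace (cycSub π ξ) := by
  unfold cycSub
  exact (Submodule.isClosed_topologicalClosure _).completeSpace_coe

theorem apply_mem_cycSub (a : A) : π a ξ ∈ cycSub π ξ :=
  (mem_cycSub_iff π ξ _).2 (subset_closure ⟨a, rfl⟩)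

theorem rep_mem_cycSub (a : A) {x : H} (hx : x ∈ cycSub π ξ) : π a x ∈ cycSub π ξ := by
  rw [mem_cycSub_iff] at hx ⊢
  refine map_mem_closure (π a).continuous hx ?_
  rintro _ ⟨b, rfl⟩
  exact ⟨a * b, by simp⟩

theorem proj_comm (a : A) (x : H) :
    (cycSub π ξ).starProjection (π a x) = π a ((cycSub π ξ).starProjection x) := by
  apply Submodule.eq_starProjection_of_mem_of_inner_eq_zero
  · exact rep_mem_cycSub π ξ a (Submodule.starProjection_apply_mem _ _)
  · intro w hw
    rw [← map_sub, rep_inner_left]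
    exact Submodule.starProjection_inner_eq_zero _ _ (rep_mem_cycSub π ξ _ hw)

/-- restriction of the representation to the cyclic subspace -/
noncomputable def resRep : A →⋆ₙₐ[ℂ] (cycSub π ξ →L[ℂ] cycSub π ξ) where
  toFun a := ((π a).comp (cycSub π ξ).subtypeL).codRestrict (cycSub π ξ)
    (fun x => rep_mem_cycSub π ξ a x.2)
  map_smul' c a := by
    ext x; change π (c • a) (x : H) = c • π a (x : H); simp
  map_zero' := by
    ext x; change π 0 (x : H) = 0; simp
  map_add' a b := by
    ext x; change π (a + b) (x : H) = π a (x : H) + π b (x : H); simp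
  map_mul' a b := by
    ext x; change π (a * b) (x : H) = π a (π b (x : H)); simp
  map_star' a := by
    rw [star_eq_adjoint, eq_adjoint_iff]
    intro x y
    change ⟪π (star a) (x : H), (y : H)⟫_ℂ = ⟪(x : H), π a (y : H)⟫_ℂ
    rw [rep_inner_left, star_star]

theorem resRep_apply (a : A) (x : cycSub π ξ) : ((resRep π ξ a x : cycSub π ξ) : H) = π a x := rfl

theorem representable_of_vector (f : A →ₗ[ℂ] ℂ) (hf : ∀ a, f a = ⟪ξ, π a ξ⟫_ℂ) :
    IsRepresentable f := by
  have hP : ∀ a, π a ((cycSub π ξ).starProjection ξ) = π a ξ := by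
    intro a
    rw [← proj_comm, Submodule.starProjection_eq_self_iff]
    exact apply_mem_cycSub π ξ a
  refine ⟨cycSub π ξ, inferInstance, inferInstance, inferInstance, resRep π ξ,
    ⟨(cycSub π ξ).starProjection ξ, Submodule.starProjection_apply_mem _ _⟩, ?_, ?_⟩
  · intro x
    rw [closure_subtype]
    have hx := (mem_cycSub_iff π ξ _).1 x.2
    convert hx using 2
    ext y
    constructor
    · rintro ⟨_, ⟨a, rfl⟩, rfl⟩
      exact ⟨a, (hP a).symm⟩
    · rintro ⟨a, rfl⟩
      exact ⟨_, ⟨a, rfl⟩, hP a⟩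
  · intro a
    rw [hf, Submodule.coe_inner, resRep_apply]
    simp only
    rw [hP]
    have := Submodule.starProjection_inner_eq_zero (K := cycSub π ξ) ξ _ (apply_mem_cycSub π ξ a)
    rw [inner_sub_left, sub_eq_zero] at this
    exact this

theorem vecFn_star_mul (R : H →L[ℂ] H) (hR : ∀ a, Commute R (π a)) (a : A) :
    vecFn π ξ R (star a * a) = ⟪π a ξ, R (π a ξ)⟫_ℂ := by
  rw [vecFn_apply, rep_inner_left, map_mul]
  have := congrArg (fun S : H →L[ℂ] H => S (π a ξ)) (hR (star a)).eq
  simpa using congrArg (fun v => ⟪ξ, v⟫_ℂ) this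

theorem vecFn_pos (R : H →L[ℂ] H) (hR : ∀ a, Commute R (π a)) (h0 : 0 ≤ R) :
    IsPosFn (vecFn π ξ R) := by
  intro a
  rw [vecFn_star_mul π ξ R hR]
  rw [nonneg_iff_isPositive] at h0
  exact h0.inner_nonneg_right _

theorem vecFn_sub (R S : H →L[ℂ] H) : vecFn π ξ R - vecFn π ξ S = vecFn π ξ (R - S) := by
  ext a; simp [vecFn_apply, inner_sub_right]

theorem vecFn_rep (R : H →L[ℂ] H) (hR : ∀ a, Commute R (π a)) (h0 : 0 ≤ R) :
    IsRepresentable (vecFn π ξ R) := by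
  have hS : ∀ a, Commute (CFC.sqrt R) (π a) := by
    intro a
    rw [CFC.sqrt_eq_cfc]
    exact (hR a).cfc_nnreal _
  have hSS := CFC.sqrt_mul_sqrt_self R h0
  have hS0 := (CFC.sqrt_nonneg R).isSelfAdjoint
  set S := CFC.sqrt R
  refine representable_of_vector π (S ξ) _ fun a => ?_
  rw [vecFn_apply, ← hSS]
  have h1 := congrArg (fun S : H →L[ℂ] H => S ξ) (hS a).eq
  simp only [clm_mul_apply] at h1 ⊢
  rw [← h1]
  rw [← adjoint_inner_left, hS0.adjoint_eq]

end cyc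

theorem pow_tendsto_zero {H : Type} [NormedAddCommGroup H] [InnerProductSpace ℂ H]
    [CompleteSpace H] (T : H →L[ℂ] H) (h0 : 0 ≤ T) (h1 : T ≤ 1)
    (hfix : ∀ x, T x = x → x = 0) (y : H) :
    Tendsto (fun n : ℕ => (T ^ n) y) atTop (𝓝 0) := by
  have hnorm : ‖T‖ ≤ 1 := (CStarAlgebra.norm_le_one_iff_of_nonneg T h0).2 h1
  have hpow0 : ∀ n, 0 ≤ T ^ n := fun n => by
    induction n with
    | zero => simpa using h0.trans h1
    | succ n ih => rw [pow_succ]; exact Commute.mul_nonneg ih h0 ((Commute.refl T).pow_left n)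
  have hanti := CStarAlgebra.pow_antitone h0 h1
  let c : ℕ → ℝ := fun n => (⟪(T ^ n) y, y⟫_ℂ).re
  have hc0 : ∀ n, 0 ≤ c n := fun n =>
    ((nonneg_iff_isPositive _).1 (hpow0 n)).re_inner_nonneg_left y
  have hcanti : Antitone c := by
    intro m n hmn
    have := ((le_def _ _).1 (hanti hmn)).re_inner_nonneg_left y
    simp only [sub_apply, inner_sub_left, map_sub] at this
    exact sub_nonneg.1 this
  obtain ⟨L, hL⟩ : ∃ L, Tendsto c atTop (𝓝 L) :=
    ⟨_, tendsto_atTop_ciInf hcanti ⟨0, by rintro _ ⟨n, rfl⟩; exact hc0 n⟩⟩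
  have hces := hL.cesaro
  have herg := T.tendsto_birkhoffAverage_orthogonalProjection hnorm y
  have hz : (((T.eqLocus (1 : H →L[ℂ] H)).orthogonalProjectionOnto y :
      T.eqLocus (1 : H →L[ℂ] H)) : H) = 0 :=
    hfix _ ((T.eqLocus (1 : H →L[ℂ] H)).orthogonalProjectionOnto y).2
  rw [hz] at herg
  have herg2 : Tendsto (fun n => (⟪birkhoffAverage ℂ T _root_.id n y, y⟫_ℂ).re) atTop (𝓝 0) := by
    have := Complex.continuous_re.tendsto _ |>.comp (herg.inner (tendsto_const_nhds (x := y)))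
    simpa [Function.comp_def] using this
  have heq : ∀ n : ℕ, (⟪birkhoffAverage ℂ T _root_.id n y, y⟫_ℂ).re
      = (n : ℝ)⁻¹ * ∑ i ∈ Finset.range n, c i := by
    intro n
    simp only [birkhoffAverage, birkhoffSum, inner_smul_left, sum_inner, c]
    rw [← Complex.re_sum]
    have : (starRingEnd ℂ) ((n : ℂ)⁻¹) = (((n : ℝ)⁻¹ : ℝ) : ℂ) := by simp
    rw [this, Complex.re_ofReal_mul]
    simp [FunLike.coe_pow]
  have hL0 : L = 0 := by
    refine tendsto_nhds_unique hces ?_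
    simpa only [heq] using herg2
  rw [hL0] at hL
  have h2 : Tendsto (fun n => c (2 * n)) atTop (𝓝 0) :=
    hL.comp (tendsto_id.const_mul_atTop' (by norm_num))
  have h3 : ∀ n, ‖(T ^ n) y‖ ^ 2 = c (2 * n) := by
    intro n
    have hsa := (hpow0 n).isSelfAdjoint
    simp only [c]
    rw [two_mul, pow_add, clm_mul_apply, ← adjoint_inner_right, hsa.adjoint_eq]
    exact (inner_self_eq_norm_sq (𝕜 := ℂ) _).symm
  rw [tendsto_zero_iff_norm_tendsto_zero]
  have h4 : Tendsto (fun n => ‖(T ^ n) y‖ ^ 2) atTop (𝓝 0) := by simpa only [h3] using h2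
  simpa using h4.sqrt

theorem absCont_of_contraction {H : Type} [NormedAddCommGroup H] [InnerProductSpace ℂ H]
    [CompleteSpace H] (π : A →⋆ₙₐ[ℂ] (H →L[ℂ] H)) (ξ : H)
    (T : H →L[ℂ] H) (h0 : 0 ≤ T) (h1 : T ≤ 1) (hT : ∀ a, Commute T (π a))
    (hfix : ∀ x, T x = x → x = 0) :
    AbsContR (vecFn π ξ T) (vecFn π ξ (1 - T)) := by
  have hanti := CStarAlgebra.pow_antitone h0 h1
  have hcom : ∀ n a, Commute (T - T ^ (n + 1)) (π a) := fun n a =>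
    (hT a).sub_left ((hT a).pow_left _)
  have hc1 : ∀ a, Commute (1 - T) (π a) := fun a => (Commute.one_left _).sub_left (hT a)
  have hpos : ∀ n, 0 ≤ T - T ^ (n + 1) := by
    intro n
    have := hanti (Nat.le_add_left 1 n)
    simpa using this
  have hstep : ∀ n : ℕ, 0 ≤ (1 - T) - (T ^ (n + 1) - T ^ (n + 2)) := by
    intro n
    have ha : (0 : H →L[ℂ] H) ≤ 1 - T := sub_nonneg.2 h1
    have hb : (0 : H →L[ℂ] H) ≤ 1 - T ^ (n + 1) := by
      have := hanti (Nat.zero_le (n + 1)); simpa using this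
    have hcc : Commute (1 - T) (1 - T ^ (n + 1)) :=
      ((Commute.one_left _).sub_left (((Commute.one_right _)).sub_right
        ((Commute.refl T).pow_right _)))
    have := Commute.mul_nonneg ha hb hcc
    convert this using 1
    rw [sub_mul, one_mul, mul_sub, mul_one, ← pow_succ' T (n + 1)]
    abel
  have hdom : ∀ n : ℕ, 0 ≤ ((n : ℕ) • (1 - T)) - (T - T ^ (n + 1)) := by
    intro n
    induction n with
    | zero => simp
    | succ n ih =>
      have := add_nonneg ih (hstep n)
      convert this using 1
      rw [succ_nsmul]
      abel
  refine ⟨fun n => vecFn π ξ (T - T ^ (n + 1)), fun n => (n : ℝ) + 1, ?_, ?_, ?_, ?_, ?_⟩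
  · exact fun n => ⟨vecFn_rep π ξ _ (hcom n) (hpos n), vecFn_pos π ξ _ (hcom n) (hpos n)⟩
  · intro n; positivity
  · intro n
    unfold FnLE
    rw [vecFn_sub]
    refine vecFn_pos π ξ _ (fun a => (hcom _ a).sub_left (hcom _ a)) ?_
    have := hanti (Nat.le_succ (n + 1))
    simpa using this
  · intro n
    unfold FnLE
    have : ((((n : ℝ) + 1 : ℝ) : ℂ)) • vecFn π ξ (1 - T) - vecFn π ξ (T - T ^ (n + 1))
        = vecFn π ξ ((n • (1 - T) - (T - T ^ (n + 1))) + (1 - T)) := by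
      ext a
      simp only [LinearMap.sub_apply, LinearMap.smul_apply, vecFn_apply, add_apply, sub_apply,
        inner_add_right, inner_sub_right, smul_apply, smul_eq_mul]
      rw [← Nat.cast_smul_eq_nsmul ℂ, inner_smul_right]
      simp only [sub_apply, inner_sub_right]
      push_cast
      ring
    rw [this]
    refine vecFn_pos π ξ _ (fun a => ?_) (add_nonneg (hdom n) (sub_nonneg.2 h1))
    exact ((((hc1 a).smul_left n).sub_left (hcom n a)).add_left (hc1 a))
  · intro a
    have := (pow_tendsto_zero T h0 h1 hfix (π a ξ)).comp (tendsto_add_atTop_nat 1)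
    have h2 := (tendsto_const_nhds (x := ξ)).inner (𝕜 := ℂ) this
    have h3 := (tendsto_const_nhds (x := vecFn π ξ T a)).sub h2
    simpa [vecFn_apply, inner_sub_right] using h3

section sum
variable {H₁ H₂ : Type} [NormedAddCommGroup H₁] [InnerProductSpace ℂ H₁]
    [CompleteSpace H₁] [NormedAddCommGroup H₂] [InnerProductSpace ℂ H₂]
    [CompleteSpace H₂]

/-- block diagonal operator -/
noncomputable def blockOp (S : H₁ →L[ℂ] H₁) (R : H₂ →L[ℂ] H₂) :
    WithLp 2 (H₁ × H₂) →L[ℂ] WithLp 2 (H₁ × H₂) :=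
  ((WithLp.prodContinuousLinearEquiv 2 ℂ H₁ H₂).symm : (H₁ × H₂) →L[ℂ] WithLp 2 (H₁ × H₂)).comp
    ((S.prodMap R).comp
      ((WithLp.prodContinuousLinearEquiv 2 ℂ H₁ H₂) : WithLp 2 (H₁ × H₂) →L[ℂ] (H₁ × H₂)))

theorem blockOp_apply (S : H₁ →L[ℂ] H₁) (R : H₂ →L[ℂ] H₂) (x : WithLp 2 (H₁ × H₂)) :
    blockOp S R x = WithLp.toLp 2 (S x.fst, R x.snd) := rfl

/-- direct sum of representations -/
noncomputable def sumRep (π₁ : A →⋆ₙₐ[ℂ] (H₁ →L[ℂ] H₁)) (π₂ : A →⋆ₙₐ[ℂ] (H₂ →L[ℂ] H₂)) :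
    A →⋆ₙₐ[ℂ] (WithLp 2 (H₁ × H₂) →L[ℂ] WithLp 2 (H₁ × H₂)) where
  toFun a := blockOp (π₁ a) (π₂ a)
  map_smul' c a := by
    ext1 x; rw [blockOp_apply, map_smul, map_smul]; rfl
  map_zero' := by
    ext1 x; rw [blockOp_apply, map_zero, map_zero]; rfl
  map_add' a b := by
    ext1 x; rw [blockOp_apply, map_add, map_add]; rfl
  map_mul' a b := by
    ext1 x; rw [blockOp_apply, map_mul, map_mul]; rfl
  map_star' a := by
    rw [star_eq_adjoint, eq_adjoint_iff]
    intro x y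
    simp only [blockOp_apply, WithLp.prod_inner_apply]
    rw [rep_inner_left, rep_inner_left, star_star]
    rfl

theorem sumRep_apply (π₁ : A →⋆ₙₐ[ℂ] (H₁ →L[ℂ] H₁)) (π₂ : A →⋆ₙₐ[ℂ] (H₂ →L[ℂ] H₂)) (a : A)
    (x : WithLp 2 (H₁ × H₂)) :
    sumRep π₁ π₂ a x = WithLp.toLp 2 (π₁ a x.fst, π₂ a x.snd) := rfl

theorem eq_zero_of_rep_zero (π : A →⋆ₙₐ[ℂ] (H₁ →L[ℂ] H₁)) (ξ : H₁)
    (hd : DenseRange (fun a : A => π a ξ)) (v : H₁) (hv : ∀ a, π a v = 0) : v = 0 := by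
  refine hd.eq_zero_of_inner_left ℂ fun a => ?_
  have := rep_inner_left π (star a) v ξ
  rw [star_star, hv, inner_zero_left] at this
  exact this.symm

/-- If the pair is closable, then `h ≪ g`. -/
theorem absCont_of_closable (h g : A →ₗ[ℂ] ℂ)
    (π₁ : A →⋆ₙₐ[ℂ] (H₁ →L[ℂ] H₁)) (ξ₁ : H₁) (hd₁ : DenseRange (fun a : A => π₁ a ξ₁))
    (hh : ∀ a : A, h a = ⟪ξ₁, π₁ a ξ₁⟫_ℂ)
    (π₂ : A →⋆ₙₐ[ℂ] (H₂ →L[ℂ] H₂)) (ξ₂ : H₂) (hd₂ : DenseRange (fun a : A => π₂ a ξ₂))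
    (hg : ∀ a : A, g a = ⟪ξ₂, π₂ a ξ₂⟫_ℂ)
    (hcl : ∀ u : H₁, (∀ ε > 0, ∃ a, ‖u - π₁ a ξ₁‖ < ε ∧ ‖π₂ a ξ₂‖ < ε) → u = 0) :
    AbsContR h g := by
  let π := sumRep π₁ π₂
  let ξ : WithLp 2 (H₁ × H₂) := WithLp.toLp 2 (ξ₁, ξ₂)
  let K := cycSub π ξ
  let P : WithLp 2 (H₁ × H₂) →L[ℂ] WithLp 2 (H₁ × H₂) := K.starProjection
  let Q : WithLp 2 (H₁ × H₂) →L[ℂ] WithLp 2 (H₁ × H₂) := blockOp 1 0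
  have hPmem : ∀ x, P x ∈ K := fun x => Submodule.starProjection_apply_mem _ _
  have hPself : ∀ x ∈ K, P x = x := fun x hx => Submodule.starProjection_eq_self_iff.2 hx
  have hPin : ∀ x y, ⟪P x, y⟫_ℂ = ⟪x, P y⟫_ℂ := fun x y =>
    Submodule.inner_starProjection_left_eq_right K x y
  have hPn : ∀ x, ‖P x‖ ≤ ‖x‖ := fun x => Submodule.norm_starProjection_apply_le K x
  have hPc : ∀ a x, P (π a x) = π a (P x) := proj_comm π ξ
  have hQc : ∀ a x, Q (π a x) = π a (Q x) := by
    intro a x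
    simp [Q, π, blockOp_apply, sumRep_apply]
  have hQin : ∀ x y, ⟪x, Q y⟫_ℂ = ⟪x.fst, y.fst⟫_ℂ := by
    intro x y
    simp [Q, blockOp_apply, WithLp.prod_inner_apply]
  let T := P * Q * P
  have hTin : ∀ x y, ⟪x, T y⟫_ℂ = ⟪(P x).fst, (P y).fst⟫_ℂ := by
    intro x y
    simp only [T, clm_mul_apply]
    rw [← hPin, hQin]
  have hnsq : ∀ x : WithLp 2 (H₁ × H₂), ‖x‖ ^ 2 = ‖x.fst‖ ^ 2 + ‖x.snd‖ ^ 2 :=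
    fun x => WithLp.prod_norm_sq_eq_of_L2 x
  have hT0 : 0 ≤ T := by
    rw [nonneg_iff_isPositive, isPositive_iff_complex]
    intro x
    have : ⟪T x, x⟫_ℂ = ((‖(P x).fst‖ ^ 2 : ℝ) : ℂ) := by
      rw [← inner_conj_symm, hTin, inner_self_eq_norm_sq_to_K]; simp
    rw [this]
    constructor
    · simp only [RCLike.re_to_complex, Complex.ofReal_re]
    · simp only [RCLike.re_to_complex, Complex.ofReal_re]; positivity
  have hT1 : T ≤ 1 := by
    rw [ContinuousLinearMap.le_def, isPositive_iff_complex]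
    intro x
    have : ⟪(1 - T) x, x⟫_ℂ = ((‖x‖ ^ 2 - ‖(P x).fst‖ ^ 2 : ℝ) : ℂ) := by
      rw [← inner_conj_symm]
      simp only [sub_apply, inner_sub_right, hTin, one_apply, inner_self_eq_norm_sq_to_K]; simp
    rw [this]
    constructor
    · simp only [RCLike.re_to_complex, Complex.ofReal_re]
    · simp only [RCLike.re_to_complex, Complex.ofReal_re]
      have h1 := hnsq (P x)
      have h2 := pow_le_pow_left₀ (norm_nonneg _) (hPn x) 2
      nlinarith [sq_nonneg ‖(P x).snd‖]
  have hTc : ∀ a, Commute T (π a) := by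
    intro a
    ext1 x
    simp only [T, clm_mul_apply]
    rw [hPc, hQc, hPc]
  have hξ : ξ ∈ K := by
    have hz : ∀ a, π a (ξ - P ξ) = 0 := by
      intro a
      rw [map_sub, ← hPc, hPself _ (apply_mem_cycSub π ξ a), sub_self]
    have e1 : (ξ - P ξ).fst = 0 := eq_zero_of_rep_zero π₁ ξ₁ hd₁ _ fun a =>
      congrArg (fun v : WithLp 2 (H₁ × H₂) => v.fst) (hz a)
    have e2 : (ξ - P ξ).snd = 0 := eq_zero_of_rep_zero π₂ ξ₂ hd₂ _ fun a =>
      congrArg (fun v : WithLp 2 (H₁ × H₂) => v.snd) (hz a)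
    have : ‖ξ - P ξ‖ ^ 2 = 0 := by rw [hnsq, e1, e2]; simp
    have : ξ - P ξ = 0 := by simpa using this
    rw [sub_eq_zero.1 this]
    exact hPmem _
  have eh : h = vecFn π ξ T := by
    ext a
    rw [vecFn_apply, hTin, hPself _ hξ, hPself _ (apply_mem_cycSub π ξ a), hh]
    rfl
  have eg : g = vecFn π ξ (1 - T) := by
    ext a
    rw [vecFn_apply, sub_apply, inner_sub_right, hTin, hPself _ hξ,
      hPself _ (apply_mem_cycSub π ξ a), hg, ContinuousLinearMap.one_def, ContinuousLinearMap.id_apply, WithLp.prod_inner_apply]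
    simp [π, ξ, sumRep_apply]
  rw [eh, eg]
  refine absCont_of_contraction π ξ T hT0 hT1 hTc ?_
  intro x hx
  have hxK : x ∈ K := by rw [← hx]; exact hPmem _
  have h1 : ‖x‖ ^ 2 = ‖x.fst‖ ^ 2 := by
    have := hTin x x
    rw [hx, hPself x hxK, inner_self_eq_norm_sq_to_K, inner_self_eq_norm_sq_to_K] at this
    exact_mod_cast this
  have h2 : x.snd = 0 := by
    have := hnsq x
    have h3 : ‖x.snd‖ ^ 2 = 0 := by linarith
    simpa using h3
  have h3 : x.fst = 0 := by
    refine hcl _ fun ε hε => ?_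
    obtain ⟨_, ⟨a, rfl⟩, ha⟩ := Metric.mem_closure_iff.1 ((mem_cycSub_iff π ξ x).1 hxK) ε hε
    rw [dist_eq_norm] at ha
    have hn := hnsq (x - π a ξ)
    have f1 : (x - π a ξ).fst = x.fst - π₁ a ξ₁ := rfl
    have f2 : (x - π a ξ).snd = x.snd - π₂ a ξ₂ := rfl
    rw [f1, f2, h2, zero_sub, norm_neg] at hn
    refine ⟨a, lt_of_le_of_lt ?_ ha, lt_of_le_of_lt ?_ ha⟩
    · exact le_of_sq_le_sq (by nlinarith [sq_nonneg ‖π₂ a ξ₂‖]) (norm_nonneg _)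
    · exact le_of_sq_le_sq (by nlinarith [sq_nonneg ‖x.fst - π₁ a ξ₁‖]) (norm_nonneg _)
  have : ‖x‖ ^ 2 = 0 := by rw [hnsq, h2, h3]; simp
  simpa using this

end sum

theorem rep_add (f p : A →ₗ[ℂ] ℂ) (hf : IsRepresentable f) (hp : IsRepresentable p) :
    IsRepresentable (f + p) := by
  obtain ⟨H₁, _, _, _, π₁, ξ₁, hd₁, h₁⟩ := hf
  obtain ⟨H₂, _, _, _, π₂, ξ₂, hd₂, h₂⟩ := hp
  refine representable_of_vector (sumRep π₁ π₂) (WithLp.toLp 2 (ξ₁, ξ₂)) _ fun a => ?_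
  rw [LinearMap.add_apply, h₁, h₂, sumRep_apply, WithLp.prod_inner_apply]
  rfl

theorem rep_sq {H : Type} [NormedAddCommGroup H] [InnerProductSpace ℂ H]
    [CompleteSpace H] {f : A →ₗ[ℂ] ℂ} (π : A →⋆ₙₐ[ℂ] (H →L[ℂ] H)) (ξ : H)
    (hf : ∀ a : A, f a = ⟪ξ, π a ξ⟫_ℂ) (a : A) :
    (f (star a * a)).re = ‖π a ξ‖ ^ 2 := by
  have : f (star a * a) = ⟪π a ξ, π a ξ⟫_ℂ := by
    rw [hf, rep_inner_left]; simp
  rw [this]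
  exact inner_self_eq_norm_sq (𝕜 := ℂ) _

theorem IsPosFn.re_nonneg {f : A →ₗ[ℂ] ℂ} (hf : IsPosFn f) (a : A) :
    0 ≤ (f (star a * a)).re := (Complex.le_def.1 (hf a)).1

theorem FnLE.re_le {f g : A →ₗ[ℂ] ℂ} (hf : FnLE f g) (a : A) :
    (f (star a * a)).re ≤ (g (star a * a)).re := by
  have := IsPosFn.re_nonneg hf a
  simpa using this

theorem IsPosFn.quasi {f : A →ₗ[ℂ] ℂ} (hf : IsPosFn f) (a b : A) :
    (f (star a * a)).re ≤ 2 * (f (star (a - b) * (a - b))).re + 2 * (f (star b * b)).re := by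
  have h1 := hf.re_nonneg (a - b - b)
  have h2 : star a * a + star (a - b - b) * (a - b - b)
      = star (a - b) * (a - b) + star (a - b) * (a - b) + (star b * b + star b * b) := by
    simp only [star_sub]
    noncomm_ring
  have h3 := congrArg (fun x => (f x).re) h2
  simp only [map_add, Complex.add_re] at h3
  linarith

theorem absCont_add (p f g : A →ₗ[ℂ] ℂ)
    (hpR : IsRepresentable p) (hpP : IsPosFn p) (hfR : IsRepresentable f)
    (hgR : IsRepresentable g) (hpf : FnLE p f) (hac : AbsContR f g) : AbsContR (f + p) g := by
  obtain ⟨H₁, _, _, _, π₁, ξ₁, hd₁, h₁⟩ := rep_add f p hfR hpR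
  obtain ⟨H₂, _, _, _, π₂, ξ₂, hd₂, h₂⟩ := hgR
  obtain ⟨fn, α, hfn, hα, hmono, hdom, hlim⟩ := hac
  have hre : ∀ a, Tendsto (fun n => (fn n (star a * a)).re) atTop (𝓝 (f (star a * a)).re) :=
    fun a => (Complex.continuous_re.tendsto _).comp (hlim _)
  have hle : ∀ n a, (fn n (star a * a)).re ≤ (f (star a * a)).re := fun n a =>
    (monotone_nat_of_le_succ (fun n => (hmono n).re_le a)).ge_of_tendsto (hre a) n
  have hfh : ∀ a, (f (star a * a)).re ≤ ‖π₁ a ξ₁‖ ^ 2 := by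
    intro a
    rw [← rep_sq π₁ ξ₁ h₁]
    have := hpP.re_nonneg a
    simpa using this
  have hhf : ∀ a, ‖π₁ a ξ₁‖ ^ 2 ≤ 2 * (f (star a * a)).re := by
    intro a
    rw [← rep_sq π₁ ξ₁ h₁]
    have := hpf.re_le a
    simp only [LinearMap.add_apply, Complex.add_re]
    linarith
  have hng : ∀ n a, (fn n (star a * a)).re ≤ α n * ‖π₂ a ξ₂‖ ^ 2 := by
    intro n a
    rw [← rep_sq π₂ ξ₂ h₂]
    simpa using (hdom n).re_le a
  refine absCont_of_closable (f + p) g π₁ ξ₁ hd₁ h₁ π₂ ξ₂ hd₂ h₂ ?_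
  intro u hu
  by_contra hne
  have hupos : 0 < ‖u‖ := norm_pos_iff.2 hne
  set δ := ‖u‖ / 4 with hδ
  have hδ0 : 0 < δ := by positivity
  obtain ⟨a, ha, -⟩ := hu δ hδ0
  have key : ∀ n, (fn n (star a * a)).re ≤ 2 * δ ^ 2 := by
    intro n
    have hb : ∀ η : ℝ, 0 < η →
        (fn n (star a * a)).re ≤ 2 * (δ + η) ^ 2 + 2 * (α n * η ^ 2) := by
      intro η hη
      obtain ⟨b, hb1, hb2⟩ := hu η hη
      have q := (hfn n).2.quasi a b
      have q1 : (fn n (star (a - b) * (a - b))).re ≤ (δ + η) ^ 2 := by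
        refine (hle n _).trans ((hfh _).trans ?_)
        refine pow_le_pow_left₀ (norm_nonneg _) ?_ 2
        have : π₁ (a - b) ξ₁ = (u - π₁ b ξ₁) - (u - π₁ a ξ₁) := by simp
        rw [this]
        have := norm_sub_le (u - π₁ b ξ₁) (u - π₁ a ξ₁)
        linarith
      have q2 : (fn n (star b * b)).re ≤ α n * η ^ 2 :=
        (hng n b).trans (mul_le_mul_of_nonneg_left
          (pow_le_pow_left₀ (norm_nonneg _) hb2.le 2) (hα n).le)
      linarith
    have ht : Tendsto (fun η : ℝ => 2 * (δ + η) ^ 2 + 2 * (α n * η ^ 2)) (𝓝[>] 0)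
        (𝓝 (2 * δ ^ 2)) := by
      have hc : Continuous (fun η : ℝ => 2 * (δ + η) ^ 2 + 2 * (α n * η ^ 2)) := by fun_prop
      have := (hc.tendsto 0).mono_left (nhdsWithin_le_nhds (s := Set.Ioi 0))
      simpa using this
    refine ge_of_tendsto ht ?_
    filter_upwards [self_mem_nhdsWithin] with η hη using hb η hη
  have hf2 : (f (star a * a)).re ≤ 2 * δ ^ 2 := le_of_tendsto' (hre a) key
  have h4 : ‖π₁ a ξ₁‖ ^ 2 ≤ (2 * δ) ^ 2 := by have := hhf a; nlinarith
  have h5 : ‖π₁ a ξ₁‖ ≤ 2 * δ := le_of_sq_le_sq h4 (by positivity)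
  have h6 : ‖u‖ ≤ ‖u - π₁ a ξ₁‖ + ‖π₁ a ξ₁‖ := by
    simpa using norm_add_le (u - π₁ a ξ₁) (π₁ a ξ₁)
  linarith

theorem rep_zero : IsRepresentable (0 : A →ₗ[ℂ] ℂ) :=
  representable_of_vector (0 : A →⋆ₙₐ[ℂ] (ℂ →L[ℂ] ℂ)) 0 _ (by simp)

theorem singular_zero (g : A →ₗ[ℂ] ℂ) : SingularR 0 g := by
  rintro q ⟨H, _, _, _, π, ξ, hd, h⟩ hqP hq0 -
  ext a
  have h1 := hq0.re_le a
  rw [rep_sq π ξ h] at h1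
  have h2 : ‖π a ξ‖ ^ 2 = 0 := le_antisymm (by simpa using h1) (by positivity)
  have h3 : π a ξ = 0 := by simpa using h2
  rw [h, h3]; simp

end Helpers

/-- **Remark 2.3**: if `p ≤ f ≪ g`, `p ⊥ g` and `p ≠ 0`, then the Lebesgue decomposition of
`h := f + p` with respect to `g` is not unique. -/
theorem lebesgue_decomposition_not_unique_of_singular_le
    {A : Type} [NonUnitalRing A] [Module ℂ A] [SMulCommClass ℂ A A]
    [IsScalarTower ℂ A A] [StarRing A] [StarModule ℂ A]
    (p f g : A →ₗ[ℂ] ℂ)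
    (hpR : IsRepresentable p) (hpP : IsPosFn p)
    (hfR : IsRepresentable f) (hfP : IsPosFn f)
    (hgR : IsRepresentable g) (hgP : IsPosFn g)
    (hpf : FnLE p f) (hac : AbsContR f g) (hsing : SingularR p g) (hp0 : p ≠ 0) :
    ¬ LebDecompUniqueForR (f + p) g := by
  intro huniq
  have hP : IsPosFn (f + p) := fun a => by
    rw [LinearMap.add_apply]; exact add_nonneg (hfP a) (hpP a)
  have d1 : IsLebDecompR (f + p) g f p := ⟨hfR, hfP, hpR, hpP, rfl, hac, hsing⟩
  have d2 : IsLebDecompR (f + p) g (f + p) 0 :=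
    ⟨rep_add f p hfR hpR, hP, rep_zero, fun a => by simp, (add_zero _).symm,
      absCont_add p f g hpR hpP hfR hgR hpf hac, singular_zero g⟩
  exact hp0 (huniq _ _ _ _ d1 d2).2
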